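/- Let k ≥ 4 and let j_1, j_2 ≥ 2 be integers with j_1 + j_2 = k. Then the number of triples (σ_1, σ_2, ℓ) where: σ_1, σ_2 are permutations of {1,…,k−1} with σ_1 ∘ σ_2 = (1,2,…,k−1) (the standard (k−1)-cycle); σ_2 has exactly two cycles; ℓ : C(σ_2) → {1,2} is a bijection; exactly j_2 − 1 cycles of σ_1 intersect the cycle ℓ^{−1}(2); and exactly j_1 − 1 cycles of σ_1 intersect the cycle ℓ^{−1}(1) but do not intersect the cycle ℓ^{−1}(2); equals k − 1. -/

import Mathlib

/-- The set of cycles of a permutation `σ` of `{1,…,n}` (orbits, including fixed points),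
each cycle given as the `Finset` of its elements. -/
def cycles {n : ℕ} (σ : Equiv.Perm (Fin n)) : Finset (Finset (Fin n)) :=
  Finset.univ.image fun x => Finset.univ.filter fun y => σ.SameCycle x y

open Equiv Equiv.Perm

namespace S10

/-- the cycle of `x` -/
def cyc {n : ℕ} (σ : Perm (Fin n)) (x : Fin n) : Finset (Fin n) :=
  Finset.univ.filter fun y => σ.SameCycle x y

lemma mem_cyc {n : ℕ} (σ : Perm (Fin n)) (x y : Fin n) : y ∈ cyc σ x ↔ σ.SameCycle x y := by
  simp [cyc]

lemma cycles_eq {n : ℕ} (σ : Perm (Fin n)) : cycles σ = Finset.univ.image (cyc σ) := rfl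

lemma cyc_eq_iff {n : ℕ} (σ : Perm (Fin n)) (x y : Fin n) :
    cyc σ x = cyc σ y ↔ σ.SameCycle x y := by
  constructor
  · intro h
    rw [← mem_cyc, h, mem_cyc]
  · intro h
    ext z
    rw [mem_cyc, mem_cyc]
    exact ⟨fun h' => h.symm.trans h', fun h' => h.trans h'⟩

lemma cyc_mem {n : ℕ} (σ : Perm (Fin n)) (x : Fin n) : cyc σ x ∈ cycles σ := by
  rw [cycles_eq]; exact Finset.mem_image_of_mem _ (Finset.mem_univ _)

lemma eq_cyc_of_mem {n : ℕ} {σ : Perm (Fin n)} {c : Finset (Fin n)} (hc : c ∈ cycles σ)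
    {x : Fin n} (hx : x ∈ c) : c = cyc σ x := by
  rw [cycles_eq, Finset.mem_image] at hc
  obtain ⟨y, -, rfl⟩ := hc
  rw [mem_cyc] at hx
  exact (cyc_eq_iff _ _ _).2 hx

lemma meet_eq {n : ℕ} (σ : Perm (Fin n)) (c : Finset (Fin n)) :
    (cycles σ).filter (fun b => (c ∩ b).Nonempty) = c.image (cyc σ) := by
  ext b
  simp only [Finset.mem_filter, Finset.mem_image]
  constructor
  · rintro ⟨hb, x, hx⟩
    rw [Finset.mem_inter] at hx
    exact ⟨x, hx.1, (eq_cyc_of_mem hb hx.2).symm⟩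
  · rintro ⟨x, hx, rfl⟩
    exact ⟨cyc_mem _ _, x, Finset.mem_inter.2 ⟨hx, (mem_cyc _ _ _).2 (SameCycle.refl _ _)⟩⟩

lemma inner {n : ℕ} (σ₁ σ₂ : Perm (Fin n)) (m p : ℕ) (h2 : (cycles σ₂).card = 2) :
    (Finset.univ.filter (fun ℓ : {c // c ∈ cycles σ₂} → Fin 2 =>
          Function.Bijective ℓ ∧
          ((cycles σ₁).filter (fun b =>
            ∃ c : {c // c ∈ cycles σ₂}, ℓ c = 1 ∧
              ((c : Finset (Fin n)) ∩ b).Nonempty)).card = m ∧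
          ((cycles σ₁).filter (fun b =>
            (∃ c : {c // c ∈ cycles σ₂}, ℓ c = 0 ∧
              ((c : Finset (Fin n)) ∩ b).Nonempty) ∧
            ∀ c : {c // c ∈ cycles σ₂}, ℓ c = 1 →
              ¬((c : Finset (Fin n)) ∩ b).Nonempty)).card = p)).card
    = ((cycles σ₂).filter (fun c => (c.image (cyc σ₁)).card = m ∧
        (cycles σ₁).card = m + p)).card := by
  have key : ∀ (ℓ : {c // c ∈ cycles σ₂} → Fin 2) (c : {c // c ∈ cycles σ₂}),
      (∀ x, ℓ x = 1 ↔ x = c) → 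
      ((((cycles σ₁).filter (fun b =>
            ∃ c : {c // c ∈ cycles σ₂}, ℓ c = 1 ∧
              ((c : Finset (Fin n)) ∩ b).Nonempty)).card = m ∧
          ((cycles σ₁).filter (fun b =>
            (∃ c : {c // c ∈ cycles σ₂}, ℓ c = 0 ∧
              ((c : Finset (Fin n)) ∩ b).Nonempty) ∧
            ∀ c : {c // c ∈ cycles σ₂}, ℓ c = 1 →
              ¬((c : Finset (Fin n)) ∩ b).Nonempty)).card = p) ↔
        ((c.1.image (cyc σ₁)).card = m ∧ (cycles σ₁).card = m + p)) := by
    intro ℓ c hc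
    have e1 : (cycles σ₁).filter (fun b =>
            ∃ c : {c // c ∈ cycles σ₂}, ℓ c = 1 ∧
              ((c : Finset (Fin n)) ∩ b).Nonempty) = c.1.image (cyc σ₁) := by
      rw [← meet_eq]
      apply Finset.filter_congr
      intro b _
      simp only [hc]
      constructor
      · rintro ⟨x, rfl, h⟩; exact h
      · intro h; exact ⟨c, rfl, h⟩
    have e2 : (cycles σ₁).filter (fun b =>
            (∃ c : {c // c ∈ cycles σ₂}, ℓ c = 0 ∧
              ((c : Finset (Fin n)) ∩ b).Nonempty) ∧
            ∀ c : {c // c ∈ cycles σ₂}, ℓ c = 1 →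
              ¬((c : Finset (Fin n)) ∩ b).Nonempty) =
        (cycles σ₁).filter (fun b => ¬ (c.1 ∩ b).Nonempty) := by
      apply Finset.filter_congr
      intro b hb
      simp only [hc]
      constructor
      · rintro ⟨-, h⟩; exact h c rfl
      · intro h
        refine ⟨?_, by rintro x rfl; exact h⟩
        rw [cycles_eq, Finset.mem_image] at hb
        obtain ⟨x, -, rfl⟩ := hb
        have hx : x ∈ cyc σ₁ x := (mem_cyc _ _ _).2 (SameCycle.refl _ _)
        refine ⟨⟨cyc σ₂ x, cyc_mem _ _⟩, ?_, x, Finset.mem_inter.2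
          ⟨(mem_cyc _ _ _).2 (SameCycle.refl _ _), hx⟩⟩
        have : ¬ ((⟨cyc σ₂ x, cyc_mem _ _⟩ : {c // c ∈ cycles σ₂}) = c) := by
          rintro rfl
          exact h ⟨x, Finset.mem_inter.2 ⟨(mem_cyc _ _ _).2 (SameCycle.refl _ _), hx⟩⟩
        rw [← hc] at this
        omega
    rw [e1, e2]
    have := Finset.card_filter_add_card_filter_not (s := cycles σ₁) (fun b => (c.1 ∩ b).Nonempty)
    rw [meet_eq] at this
    omega
  have hcard : Fintype.card {c // c ∈ cycles σ₂} = 2 := by simpa using h2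
  symm
  refine Finset.card_bij (fun c _ => fun x => if x.1 = c then 1 else 0) ?_ ?_ ?_
  · intro c hc
    rw [Finset.mem_filter] at hc ⊢
    refine ⟨Finset.mem_univ _, ?_, ?_⟩
    · rw [Fintype.bijective_iff_surjective_and_card]
      refine ⟨?_, by simp [h2]⟩
      intro y
      obtain ⟨d, hd, hdc⟩ := Finset.exists_mem_ne (by omega : 1 < (cycles σ₂).card) c
      fin_cases y
      · exact ⟨⟨d, hd⟩, by simp [hdc]⟩
      · exact ⟨⟨c, hc.1⟩, by simp⟩
    · refine (key _ ⟨c, hc.1⟩ ?_).2 hc.2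
      intro x
      simp [Subtype.ext_iff]
  · intro c hc d hd h
    have := congrFun h ⟨c, (Finset.mem_filter.1 hc).1⟩
    by_contra hne
    simp [hne] at this
  · intro ℓ hℓ
    rw [Finset.mem_filter] at hℓ
    obtain ⟨-, hb, h⟩ := hℓ
    obtain ⟨c, hc⟩ := hb.2 1
    have hiff : ∀ x, ℓ x = 1 ↔ x = c := by
      intro x
      rw [← hc]; exact hb.1.eq_iff
    refine ⟨c.1, Finset.mem_filter.2 ⟨c.2, (key ℓ c hiff).1 h⟩, ?_⟩
    funext x
    have := hiff x
    rw [Subtype.ext_iff] at this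
    split_ifs with hx
    · exact (this.2 hx).symm
    · have : ¬ ℓ x = 1 := fun h => hx (this.1 h)
      omega

lemma exists_swap {n : ℕ} (σ : Perm (Fin (n+1))) (h : (cycles σ).card = n) :
    ∃ a b, a ≠ b ∧ σ = swap a b := by
  have h1 : ∃ a, σ a ≠ a := by
    by_contra! hcon
    have : σ = 1 := Equiv.ext hcon
    subst this
    rw [cycles_eq, Finset.card_image_of_injective] at h
    · simp at h
    · intro x y hxy
      rw [cyc_eq_iff] at hxy
      simpa using hxy
  obtain ⟨a, ha⟩ := h1
  have him : (Finset.univ.erase a).image (cyc σ) = cycles σ := by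
    apply Finset.Subset.antisymm
    · rw [cycles_eq]; exact Finset.image_subset_image (Finset.subset_univ _)
    · intro b hb
      rw [cycles_eq, Finset.mem_image] at hb
      obtain ⟨x, -, rfl⟩ := hb
      rw [Finset.mem_image]
      by_cases hx : x = a
      · subst hx
        exact ⟨σ x, by simp [ha], (cyc_eq_iff _ _ _).2 (by simp [SameCycle.refl])⟩
      · exact ⟨x, by simp [hx], rfl⟩
  have hinj : Set.InjOn (cyc σ) (Finset.univ.erase a : Finset (Fin (n+1))) := by
    apply Finset.injOn_of_card_image_eq
    rw [him, h]
    simp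
  have key : ∀ x y, x ≠ a → y ≠ a → σ.SameCycle x y → x = y := by
    intro x y hx hy hxy
    exact hinj (by simp [hx]) (by simp [hy]) ((cyc_eq_iff _ _ _).2 hxy)
  refine ⟨a, σ a, ha.symm, ?_⟩
  ext1 x
  by_cases hx : x = a
  · subst hx; simp
  have hs : σ.SameCycle x (σ x) := by simp [SameCycle.refl]
  by_cases hxa : σ x = a
  · have h1 : σ.SameCycle x (σ a) := by
      rw [← hxa] ; simp [SameCycle.refl]
    have := key _ _ hx ha h1
    rw [hxa]
    conv_rhs => rw [this]
    simp
  · have := key _ _ hx hxa hs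
    rw [swap_apply_of_ne_of_ne hx]
    · exact this.symm
    · intro hx2
      rw [hx2] at this
      exact hx (hx2.trans (σ.injective this.symm))

lemma sameCycle_swap {n : ℕ} {a b x y : Fin n}  :
    (swap a b).SameCycle x y → x = y ∨ ((x = a ∨ x = b) ∧ (y = a ∨ y = b)) := by
  intro h
  obtain ⟨i, -, rfl⟩ := h.exists_pow_eq'
  induction i with
  | zero => simp
  | succ i ih =>
    rw [pow_succ', Perm.mul_apply]
    specialize ih ⟨i, rfl⟩
    rw [swap_apply_def]
    split_ifs with h1 h2 
    · rw [h1] at ih; tauto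
    · rw [h2] at ih; tauto
    · exact ih

lemma swap_inj {n : ℕ} {a b : Fin n} (c : Finset (Fin n)) (h : b ∉ c) :
    (c.image (cyc (swap a b))).card = c.card := by
  apply Finset.card_image_of_injOn
  intro x hx y hy hxy
  rw [cyc_eq_iff] at hxy
  have hx' : x ≠ b := fun e => h (e ▸ hx)
  have hy' : y ≠ b := fun e => h (e ▸ hy)
  rcases sameCycle_swap hxy with h | h
  · exact h
  · rw [h.1.resolve_right hx', h.2.resolve_right hy']

lemma card_cycles_swap {n : ℕ} {a b : Fin (n+1)} (hab : a ≠ b) :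
    (cycles (swap a b)).card = n := by
  have : cycles (swap a b) = (Finset.univ.erase b).image (cyc (swap a b)) := by
    apply Finset.Subset.antisymm
    · intro c hc
      rw [cycles_eq, Finset.mem_image] at hc
      obtain ⟨x, -, rfl⟩ := hc
      rw [Finset.mem_image]
      by_cases hx : x = b
      · subst hx
        refine ⟨a, by simp [hab], (cyc_eq_iff _ _ _).2 ?_⟩
        exact ⟨1, by simp⟩
      · exact ⟨x, by simp [hx], rfl⟩
    · rw [cycles_eq]; exact Finset.image_subset_image (Finset.subset_univ _)
  rw [this, swap_inj _ (by simp)]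
  simp

/-- the second factor -/
abbrev s2 {n : ℕ} (a b : Fin (n+1)) : Perm (Fin (n+1)) := swap a b * finRotate (n+1)

lemma s2_apply {n : ℕ} (a b x : Fin (n+1)) : s2 a b x = swap a b (x+1) := by
  simp [s2]

lemma s2_comm {n : ℕ} (a b : Fin (n+1)) : s2 a b = s2 b a := by
  simp [s2, swap_comm]

lemma s2_step {n : ℕ} (a v u : Fin (n+1)) (huv : u < v) :
    (u + 1 = v ∧ s2 a (a+v) (a+u) = a) ∨
    (u + 1 < v ∧ s2 a (a+v) (a+u) = a + (u+1)) := by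
  have hval : (u+1).val = u.val + 1 := Fin.val_add_one_of_lt (lt_of_lt_of_le huv (Fin.le_last v))
  rw [s2_apply, add_assoc]
  by_cases h : u + 1 = v
  · left
    simp [h]
  · right
    refine ⟨?_, ?_⟩
    · rw [Fin.lt_def] at *
      have : (u+1).val ≠ v.val := fun e => h (Fin.ext e)
      omega
    · apply swap_apply_of_ne_of_ne
      · intro e
        have : u + 1 = 0 := by simpa using e
        rw [this] at hval
        simp at hval
      · intro e
        exact h (by simpa using e)

lemma s2_same {n : ℕ} (a v : Fin (n+1)) (hv : v ≠ 0) (u : Fin (n+1)) :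
    (s2 a (a+v)).SameCycle a (a+u) ↔ u < v := by
  constructor
  · intro h
    obtain ⟨i, -, hi⟩ := h.exists_pow_eq'
    clear h
    induction i generalizing u with
    | zero =>
      have : u = 0 := by simpa using hi.symm
      subst this
      exact Fin.pos_iff_ne_zero.2 hv
    | succ i ih =>
      rw [pow_succ', Perm.mul_apply] at hi
      have h1 := ih (((s2 a (a+v))^i) a - a) (by abel)
      rcases s2_step a v _ h1 with ⟨_, h2⟩ | ⟨h3, h2⟩
      · rw [add_sub_cancel, hi] at h2
        have : u = 0 := by simpa using h2
        subst this
        exact Fin.pos_iff_ne_zero.2 hv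
      · rw [add_sub_cancel a, hi] at h2
        rw [add_left_cancel h2]
        exact h3
  · intro h
    obtain ⟨i, hi⟩ : ∃ i, u.val = i := ⟨_, rfl⟩
    induction i generalizing u with
    | zero =>
      have : u = 0 := Fin.ext hi
      subst this
      simp [SameCycle.refl]
    | succ i ih =>
      have hlt : i < n + 1 := by omega
      have hw : (⟨i, hlt⟩ : Fin (n+1)) < v := by
        rw [Fin.lt_def] at *
        simp only
        omega
      have hw1 : (⟨i, hlt⟩ : Fin (n+1)) + 1 = u := by
        apply Fin.ext
        rw [Fin.val_add_one_of_lt (lt_of_lt_of_le hw (Fin.le_last v)), hi]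
      have h1 := ih _ hw rfl
      rcases s2_step a v _ hw with ⟨h3, _⟩ | ⟨_, h3⟩
      · rw [hw1] at h3
        exact absurd h3 h.ne
      · rw [hw1] at h3
        rw [← h3]
        exact h1.trans (⟨1, by rw [zpow_one]⟩)

lemma s2_same' {n : ℕ} {a b : Fin (n+1)} (hab : a ≠ b) (y : Fin (n+1)) :
    (s2 a b).SameCycle a y ↔ y - a < b - a := by
  have := s2_same a (b - a) (by rw [sub_ne_zero]; exact hab.symm) (y - a)
  simpa using this

lemma not_same {n : ℕ} {a b : Fin (n+1)} (hab : a ≠ b) : ¬ (s2 a b).SameCycle a b := by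
  rw [s2_same' hab]; exact lt_irrefl _

lemma val_sub_ite {n : ℕ} (x y : Fin (n+1)) :
    (x - y).val = if y.val ≤ x.val then x.val - y.val else n + 1 + x.val - y.val := by
  rw [Fin.val_sub]
  split_ifs with h
  · have : n + 1 - y.val + x.val = (x.val - y.val) + (n + 1) := by omega
    rw [this, Nat.add_mod_right, Nat.mod_eq_of_lt (by omega)]
  · rw [Nat.mod_eq_of_lt (by omega)]
    omega

lemma cover {n : ℕ} {a b : Fin (n+1)} (hab : a ≠ b) (y : Fin (n+1)) :
    (s2 a b).SameCycle a y ∨ (s2 a b).SameCycle b y := by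
  rw [s2_same' hab, s2_comm, s2_same' hab.symm]
  by_contra! h
  have h1 : b ≠ y := by
    rintro rfl
    have := h.2
    simp only [sub_self, Fin.le_zero_iff, sub_eq_zero] at this
    exact hab this
  obtain ⟨h2, h3⟩ := h
  simp only [Fin.le_def, val_sub_ite, ne_eq, Fin.ext_iff] at *
  split_ifs at h2 h3 <;> omega

lemma card_cyc {n : ℕ} {a b : Fin (n+1)} (hab : a ≠ b) :
    (cyc (s2 a b) a).card = (b - a).val := by
  have : cyc (s2 a b) a = (Finset.Iio (b - a)).image (fun u => a + u) := by
    ext y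
    rw [mem_cyc, s2_same' hab, Finset.mem_image]
    constructor
    · intro h; exact ⟨y - a, by simpa using h, by abel⟩
    · rintro ⟨u, hu, rfl⟩
      simpa using hu
  rw [this, Finset.card_image_of_injective _ (add_right_injective a)]
  simp

lemma cycles_s2 {n : ℕ} {a b : Fin (n+1)} (hab : a ≠ b) :
    cycles (s2 a b) = {cyc (s2 a b) a, cyc (s2 a b) b} := by
  ext c
  simp only [Finset.mem_insert, Finset.mem_singleton]
  constructor
  · intro h
    rw [cycles_eq, Finset.mem_image] at h
    obtain ⟨y, -, rfl⟩ := h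
    rw [cyc_eq_iff, cyc_eq_iff]
    exact (cover hab y).imp (fun h => h.symm) (fun h => h.symm)
  · rintro (rfl | rfl) <;> exact cyc_mem _ _

lemma main (n m p : ℕ) (hm : 1 ≤ m) (hp : 1 ≤ p) (hmp : m + p = n) :
    (∑ σ₁ : Perm (Fin (n+1)), ∑ σ₂ : Perm (Fin (n+1)),
      if σ₁ * σ₂ = finRotate (n+1) ∧ (cycles σ₂).card = 2 then
        ((cycles σ₂).filter (fun c => (c.image (cyc σ₁)).card = m ∧
        (cycles σ₁).card = m + p)).card else 0) = n + 1 := by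
  classical
  let T : Finset (Perm (Fin (n+1)) × Perm (Fin (n+1)) × Finset (Fin (n+1))) :=
    Finset.univ.filter fun t => (t.1 * t.2.1 = finRotate (n+1) ∧ (cycles t.2.1).card = 2) ∧
      t.2.2 ∈ cycles t.2.1 ∧ (t.2.2.image (cyc t.1)).card = m ∧ (cycles t.1).card = m + p
  have hT : (∑ σ₁ : Perm (Fin (n+1)), ∑ σ₂ : Perm (Fin (n+1)),
      if σ₁ * σ₂ = finRotate (n+1) ∧ (cycles σ₂).card = 2 then
        ((cycles σ₂).filter (fun c => (c.image (cyc σ₁)).card = m ∧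
        (cycles σ₁).card = m + p)).card else 0) = T.card := by
    simp only [T]
    rw [Finset.card_filter, Fintype.sum_prod_type]
    refine Finset.sum_congr rfl fun σ₁ _ => ?_
    rw [Fintype.sum_prod_type]
    refine Finset.sum_congr rfl fun σ₂ _ => ?_
    rw [← Finset.card_filter]
    split_ifs with h
    · congr 1
      ext c
      simp [h]
    · simp [h]
  rw [hT]
  let M : Fin (n+1) := ⟨m, by omega⟩
  have hM : M ≠ 0 := by
    intro e
    have := congrArg Fin.val e
    simp [M] at this
    omega
  have hne : ∀ a, a ≠ a + M := by
    intro a e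
    exact hM (by simpa using e.symm)
  let f : Fin (n+1) → Perm (Fin (n+1)) × Perm (Fin (n+1)) × Finset (Fin (n+1)) :=
    fun a => (swap a (a+M), s2 a (a+M), cyc (s2 a (a+M)) a)
  have himg : T = Finset.univ.image f := by
    ext ⟨σ₁, σ₂, c⟩
    simp only [T, f, Finset.mem_filter, Finset.mem_univ, true_and, Finset.mem_image, Prod.mk.injEq]
    constructor
    · rintro ⟨⟨h1, h2⟩, h3, h4, h5⟩
      rw [hmp] at h5
      obtain ⟨a, b, hab, rfl⟩ := exists_swap σ₁ h5
      have hs : σ₂ = s2 a b := by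
        rw [s2, ← h1, ← mul_assoc, swap_mul_self, one_mul]
      subst hs
      have fin : ∀ a b : Fin (n+1), a ≠ b → ((cyc (s2 a b) a).image (cyc (swap a b))).card = m →
          b = a + M := by
        intro a b hab h
        rw [swap_inj, card_cyc hab] at h
        · have : b - a = M := Fin.ext h
          rw [← this]; abel
        · rw [mem_cyc]; exact not_same hab
      rw [cycles_s2 hab] at h3
      simp only [Finset.mem_insert, Finset.mem_singleton] at h3
      rcases h3 with rfl | rfl
      · have := fin a b hab h4
        subst this
        exact ⟨a, rfl, rfl, rfl⟩
      · rw [s2_comm, swap_comm] at h4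
        have := fin b a hab.symm h4
        subst this
        exact ⟨b, swap_comm _ _, s2_comm _ _, by rw [s2_comm]⟩
    · rintro ⟨a, rfl, rfl, rfl⟩
      have hab := hne a
      refine ⟨⟨by rw [s2, ← mul_assoc, swap_mul_self, one_mul], ?_⟩, cyc_mem _ _, ?_, ?_⟩
      · rw [cycles_s2 hab, Finset.card_pair]
        rw [Ne, cyc_eq_iff]
        exact not_same hab
      · rw [swap_inj, card_cyc hab]
        · simp [M]
        · rw [mem_cyc]; exact not_same hab
      · rw [card_cycles_swap hab, hmp]
  rw [himg, Finset.card_image_of_injective]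
  · simp
  · intro a a' h
    simp only [f, Prod.mk.injEq] at h
    obtain ⟨h1, h2, h3⟩ := h
    by_contra hne'
    have hx : a' = a + M := by
      have h4 : swap a (a+M) a' = a' + M := by rw [h1]; simp
      by_contra hcon
      rw [swap_apply_of_ne_of_ne (Ne.symm hne') hcon] at h4
      exact hne _ h4
    rw [← h2, cyc_eq_iff, hx] at h3
    exact not_same (hne a) h3

end S10

/-- for `k ≥ 4` and `j_1, j_2 ≥ 2` with `j_1 + j_2 = k`, the number of triples
`(σ₁, σ₂, ℓ)` with `σ₁, σ₂` permutations of `{1,…,k−1}`, `σ₁ σ₂ = (1,…,k−1)`, `σ₂` having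
exactly two cycles, `ℓ : C(σ₂) → {1,2}` a bijection, exactly `j_2 − 1` cycles of `σ₁`
intersecting `ℓ⁻¹(2)`, and exactly `j_1 − 1` cycles of `σ₁` intersecting `ℓ⁻¹(1)` but not
`ℓ⁻¹(2)`, equals `k − 1`.  (Here the label set `{1,2}` is encoded as `Fin 2`, with `0`
standing for label `1` and `1` for label `2`.) -/
theorem stmt_10 (k j₁ j₂ : ℕ) (hk : 4 ≤ k) (hj₁ : 2 ≤ j₁) (hj₂ : 2 ≤ j₂)
    (hsum : j₁ + j₂ = k) :
    (∑ σ₁ : Equiv.Perm (Fin (k - 1)), ∑ σ₂ : Equiv.Perm (Fin (k - 1)),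
      if σ₁ * σ₂ = finRotate (k - 1) ∧ (cycles σ₂).card = 2 then
        (Finset.univ.filter (fun ℓ : {c // c ∈ cycles σ₂} → Fin 2 =>
          Function.Bijective ℓ ∧
          ((cycles σ₁).filter (fun b =>
            ∃ c : {c // c ∈ cycles σ₂}, ℓ c = 1 ∧
              ((c : Finset (Fin (k - 1))) ∩ b).Nonempty)).card = j₂ - 1 ∧
          ((cycles σ₁).filter (fun b =>
            (∃ c : {c // c ∈ cycles σ₂}, ℓ c = 0 ∧
              ((c : Finset (Fin (k - 1))) ∩ b).Nonempty) ∧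
            ∀ c : {c // c ∈ cycles σ₂}, ℓ c = 1 →
              ¬((c : Finset (Fin (k - 1))) ∩ b).Nonempty)).card = j₁ - 1)).card
      else 0) = k - 1 := by
  have h1 : ∃ n, k - 1 = n + 1 := ⟨k - 2, by omega⟩
  obtain ⟨n, hn⟩ := h1
  have hmp : (j₂ - 1) + (j₁ - 1) = n := by omega
  have hm : 1 ≤ j₂ - 1 := by omega
  have hp : 1 ≤ j₁ - 1 := by omega
  generalize k - 1 = N at *
  generalize j₁ - 1 = p at *
  generalize j₂ - 1 = m at *
  subst hn
  refine Eq.trans ?_ (S10.main n m p hm hp hmp)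
  refine Finset.sum_congr rfl fun σ₁ _ => Finset.sum_congr rfl fun σ₂ _ => ?_
  split_ifs with h
  · exact S10.inner σ₁ σ₂ m p h.2
  · rfl
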